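/- arXiv:1309.3539 — 2 statements merged into one kernel-verified Lean document; each statement's English description precedes it below -/
import Mathlib

section
/- Let U be a field of characteristic zero, δ and δ' two derivations of U with δ ∘ δ' = δ' ∘ δ, and A, A' d×d matrices over U satisfying δ'(A) − δ(A') = A·A' − A'·A (entrywise application). Let R = U[X_{jk} : 1 ≤ j,k ≤ d] be the polynomial ring over U in the entries of a generic d×d matrix X = (X_{jk}). Let D and D' be the unique derivations of R restricting to δ and δ' on U, respectively, and satisfying D(X) = −A·X and D'(X) = −A'·X (meaning D(X_{jk}) is the (j,k) entry of −A·X, and similarly for D'). Then D ∘ D' = D' ∘ D. -/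
/-!
Both composites `D ∘ D'` and `D' ∘ D` expand on a sum or a product in the same way, up to the
symmetric cross terms `D f * D' g + D' f * D g`. Hence the set where they agree is a subring, and
it suffices to compare them on constants, where `δ` and `δ'` commute, and on the variables.
For the generic matrix `X`, the entrywise Leibniz rule for matrix products gives
`D (D' X) = -δ(A') X + A' A X` and `D' (D X) = -δ'(A) X + A A' X`, and these agree precisely by
the hypothesis `δ'(A) - δ(A') = A A' - A' A`.
-/

open MvPolynomial

/-- Leibniz rule for the entrywise application of a derivation to a product of matrices. -/
lemma matrix_map_mul_of_leibniz {R n : Type*} [CommRing R] [Fintype n] (E : R →+ R)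
    (hE : ∀ f g, E (f * g) = E f * g + f * E g) (M N : Matrix n n R) :
    (M * N).map E = M.map E * N + M * N.map E := by
  ext i j
  simp [Matrix.mul_apply, map_sum, hE, Finset.sum_add_distrib]

/-- If `E(X) = -A X`, `E` restricts to `δ` on constants and `B` has constant entries, then
`E(-B X) = -δ(B) X + B A X`. -/
lemma map_neg_mul_generic {U n : Type*} [Field U] [Fintype n] (δ : U → U)
    (E : MvPolynomial (n × n) U →+ MvPolynomial (n × n) U)
    (hE : ∀ f g, E (f * g) = E f * g + f * E g) (hEC : ∀ a, E (C a) = C (δ a))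
    (A B : Matrix n n U) (M : Matrix n n (MvPolynomial (n × n) U))
    (hM : M.map E = -(A.map C * M)) :
    (-(B.map C * M)).map E = -((B.map δ).map C * M) + (B * A).map C * M := by
  have hneg (N : Matrix n n (MvPolynomial (n × n) U)) : (-N).map E = -N.map E := by
    ext1 i j
    simp
  have hB : (B.map C).map E = (B.map δ).map C := by
    ext1 i j
    simp [hEC]
  rw [hneg, matrix_map_mul_of_leibniz E hE, hM, hB, Matrix.map_mul, Matrix.mul_neg,
    ← Matrix.mul_assoc]
  abel

/-- if `δ'(A) − δ(A') = A·A' − A'·A`, then the derivations `D`, `D'` of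
`U[X_{jk}]` extending `δ`, `δ'` with `D(X) = −A·X` and `D'(X) = −A'·X` commute. -/
theorem extended_derivations_commute
    (U : Type*) [Field U] [CharZero U] (δ δ' : U → U)
    (hδadd : ∀ a b : U, δ (a + b) = δ a + δ b)
    (hδleib : ∀ a b : U, δ (a * b) = δ a * b + a * δ b)
    (hδ'add : ∀ a b : U, δ' (a + b) = δ' a + δ' b)
    (hδ'leib : ∀ a b : U, δ' (a * b) = δ' a * b + a * δ' b)
    (hcomm : ∀ a : U, δ (δ' a) = δ' (δ a))
    (d : ℕ) (A A' : Matrix (Fin d) (Fin d) U)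
    (hAA' : A.map δ' - A'.map δ = A * A' - A' * A)
    (D D' : MvPolynomial (Fin d × Fin d) U → MvPolynomial (Fin d × Fin d) U)
    (hDadd : ∀ f g, D (f + g) = D f + D g)
    (hDleib : ∀ f g, D (f * g) = D f * g + f * D g)
    (hDC : ∀ a : U, D (C a) = C (δ a))
    (hDX : ∀ j k : Fin d, D (X (j, k)) = -∑ l, C (A j l) * X (l, k))
    (hD'add : ∀ f g, D' (f + g) = D' f + D' g)
    (hD'leib : ∀ f g, D' (f * g) = D' f * g + f * D' g)
    (hD'C : ∀ a : U, D' (C a) = C (δ' a))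
    (hD'X : ∀ j k : Fin d, D' (X (j, k)) = -∑ l, C (A' j l) * X (l, k)) :
    ∀ f, D (D' f) = D' (D f) := by
  let E : MvPolynomial (Fin d × Fin d) U →+ MvPolynomial (Fin d × Fin d) U :=
    AddMonoidHom.mk' D hDadd
  let E' : MvPolynomial (Fin d × Fin d) U →+ MvPolynomial (Fin d × Fin d) U :=
    AddMonoidHom.mk' D' hD'add
  let M : Matrix (Fin d) (Fin d) (MvPolynomial (Fin d × Fin d) U) :=
    Matrix.of fun j k => X (j, k)
  have hM : M.map E = -(A.map C * M) := by
    ext1 j k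
    simpa [M, E, Matrix.mul_apply] using hDX j k
  have hM' : M.map E' = -(A'.map C * M) := by
    ext1 j k
    simpa [M, E', Matrix.mul_apply] using hD'X j k
  have key : (M.map E').map E = (M.map E).map E' := by
    rw [hM', hM, map_neg_mul_generic δ E hDleib hDC A A' M hM,
      map_neg_mul_generic δ' E' hD'leib hD'C A' A M hM']
    have hA : A.map δ' = A'.map δ + (A * A' - A' * A) := by rw [← hAA']; abel
    rw [hA, Matrix.map_add _ (map_add C), Matrix.map_sub _ (map_sub C), Matrix.add_mul,
      Matrix.sub_mul]
    abel
  intro f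
  induction f using MvPolynomial.induction_on with
  | C a => rw [hD'C, hDC, hDC, hD'C, hcomm]
  | add p q hp hq => rw [hD'add, hDadd, hDadd, hD'add, hp, hq]
  | mul_X p i hp =>
    have hX : D (D' (X i)) = D' (D (X i)) := congrFun (congrFun key i.1) i.2
    simp only [hDleib, hD'leib, hDadd, hD'add, hp, hX]
    ring
end

section
/- Let U be a field of characteristic zero, δ a derivation of U, and σ a ring automorphism of U with σ ∘ δ = δ ∘ σ. Let A be a d×d matrix over U and B an invertible d×d matrix over U satisfying B⁻¹·A = δ(B⁻¹) + σ(A)·B⁻¹ (entrywise application). Let R = U[X_{jk} : 1 ≤ j,k ≤ d] be the polynomial ring in the entries of a generic d×d matrix X = (X_{jk}), let D be the unique derivation of R restricting to δ on U with D(X) = −A·X, and let S : R → R be the unique ring homomorphism restricting to σ on U with S(X) = B⁻¹·X. Then S ∘ D = D ∘ S. -/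
/-!
Both `S ∘ D` and `D ∘ S` are additive and satisfy the `S`-twisted Leibniz rule
`T (f * g) = T f * S g + S f * T g`, so it suffices to compare them on constants, where they agree
because `σ` commutes with `δ`, and on the variables. There `S (D X) = -σ(A) B⁻¹ X` and
`D (S X) = (δ(B⁻¹) - B⁻¹ A) X`, which coincide by the hypothesis relating `A` and `B`.
-/

open MvPolynomial

/-- if `B⁻¹·A = δ(B⁻¹) + σ(A)·B⁻¹`, then the derivation `D` of `U[X_{jk}]`
extending `δ` with `D(X) = −A·X` commutes with the ring endomorphism `S` extending `σ`
with `S(X) = B⁻¹·X`. -/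
theorem extended_derivation_commutes_with_endomorphism
    (U : Type*) [Field U] [CharZero U] (δ : U → U)
    (hδadd : ∀ a b : U, δ (a + b) = δ a + δ b)
    (hδleib : ∀ a b : U, δ (a * b) = δ a * b + a * δ b)
    (σ : U ≃+* U) (hσδ : ∀ a : U, σ (δ a) = δ (σ a))
    (d : ℕ) (A B : Matrix (Fin d) (Fin d) U) (hB : IsUnit B)
    (h : B⁻¹ * A = (B⁻¹).map δ + A.map σ * B⁻¹)
    (D : MvPolynomial (Fin d × Fin d) U → MvPolynomial (Fin d × Fin d) U)
    (hDadd : ∀ f g, D (f + g) = D f + D g)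
    (hDleib : ∀ f g, D (f * g) = D f * g + f * D g)
    (hDC : ∀ a : U, D (C a) = C (δ a))
    (hDX : ∀ j k : Fin d, D (X (j, k)) = -∑ l, C (A j l) * X (l, k))
    (S : MvPolynomial (Fin d × Fin d) U →+* MvPolynomial (Fin d × Fin d) U)
    (hSC : ∀ a : U, S (C a) = C (σ a))
    (hSX : ∀ j k : Fin d, S (X (j, k)) = ∑ l, C (B⁻¹ j l) * X (l, k)) :
    ∀ f, S (D f) = D (S f) := by
  have hD0 : D 0 = 0 := by simpa using hDadd 0 0
  have hDsum : ∀ g : Fin d → MvPolynomial (Fin d × Fin d) U, D (∑ l, g l) = ∑ l, D (g l) :=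
    fun g => map_sum (AddMonoidHom.mk ⟨D, hD0⟩ hDadd) g Finset.univ
  have hX : ∀ j k : Fin d, S (D (X (j, k))) = D (S (X (j, k))) := by
    intro j k
    have hent : ∀ m, ∑ l, B⁻¹ j l * A l m = δ (B⁻¹ j m) + ∑ l, σ (A j l) * B⁻¹ l m := by
      intro m
      simpa [Matrix.mul_apply] using congrFun (congrFun h j) m
    have hSD : S (D (X (j, k))) = -∑ m, C (∑ l, σ (A j l) * B⁻¹ l m) * X (m, k) := by
      simp only [hDX, map_neg, map_sum, map_mul, hSC, hSX, Finset.mul_sum, Finset.sum_mul]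
      rw [Finset.sum_comm]
      simp only [mul_assoc]
    have hDS : D (S (X (j, k))) =
        ∑ m, C (δ (B⁻¹ j m)) * X (m, k) - ∑ m, C (∑ l, B⁻¹ j l * A l m) * X (m, k) := by
      simp only [hSX, hDsum, hDleib, hDC, hDX, mul_neg,
        ← sub_eq_add_neg, Finset.sum_sub_distrib, map_sum, map_mul, Finset.mul_sum,
        Finset.sum_mul]
      congr 1
      rw [Finset.sum_comm]
      simp only [mul_assoc]
    rw [hSD, hDS]
    simp only [hent, map_add, add_mul, Finset.sum_add_distrib]
    ring
  intro f
  induction f using MvPolynomial.induction_on with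
  | C a => rw [hDC, hSC, hSC, hDC, hσδ]
  | add p q hp hq => rw [hDadd, map_add, map_add, hDadd, hp, hq]
  | mul_X p i hp => rw [hDleib, map_add, map_mul, map_mul, map_mul, hDleib, hp, hX i.1 i.2]
end
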